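/- arXiv:2411.09511 — 2 statements merged into one kernel-verified Lean document; each statement's English description precedes it below -/
import Mathlib

section
/- For all m, n ∈ ℕ (including 0), the W^{1,2}-inner product of Hermite functions, ⟨𝓗_m, 𝓗_n⟩_{W^{1,2}} := ∫_ℝ 𝓗_m(x)·𝓗_n(x) dx + ∫_ℝ 𝓗′_m(x)·𝓗′_n(x) dx, satisfies: ⟨𝓗_m, 𝓗_n⟩_{W^{1,2}} = 1 + π(2m+1) if m = n; ⟨𝓗_m, 𝓗_n⟩_{W^{1,2}} = −π·√(ℓ(ℓ−1)) with ℓ = max{m,n} if |m − n| = 2; and ⟨𝓗_m, 𝓗_n⟩_{W^{1,2}} = 0 otherwise. -/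
open MeasureTheory Real

/-- The Hermite polynomial `H_m(x) = (−1)^m 2^{1/4−m} (m!)^{−1/2} π^{−m/2}
    exp(2πx²) (d^m/dx^m) exp(−2πx²)`. -/
noncomputable def hermitePoly (m : ℕ) (x : ℝ) : ℝ :=
  (-1 : ℝ) ^ m * (2 : ℝ) ^ ((1 : ℝ) / 4 - (m : ℝ)) * (Nat.factorial m : ℝ) ^ (-(1 : ℝ) / 2)
    * Real.pi ^ (-(m : ℝ) / 2) * Real.exp (2 * Real.pi * x ^ 2)
    * iteratedDeriv m (fun y => Real.exp (-(2 * Real.pi * y ^ 2))) x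

/-- The Hermite function `𝓗_m(x) = H_m(x) · exp(−πx²)`. -/
noncomputable def hermiteFun (m : ℕ) (x : ℝ) : ℝ :=
  hermitePoly m x * Real.exp (-(Real.pi * x ^ 2))

open Polynomial in
/-- Unnormalised Hermite polynomials. -/
noncomputable def PP : ℕ → Polynomial ℝ
  | 0 => 1
  | (m+1) => C (4 * π) * X * PP m - derivative (PP m)

open Polynomial in
theorem PP_succ (m : ℕ) : PP (m+1) = C (4 * π) * X * PP m - derivative (PP m) := rfl

open Polynomial in
theorem PP_der (m : ℕ) : derivative (PP (m+1)) = C (4 * π * (m+1)) * PP m := by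
  induction m with
  | zero => simp [PP]
  | succ m ih =>
    rw [PP_succ (m+1)]
    simp only [derivative_sub, derivative_mul, derivative_C, derivative_X, ih]
    rw [PP_succ m]
    simp only [map_mul, map_add, map_natCast, map_one, Nat.cast_add, Nat.cast_one]
    ring

theorem hasDeriv_g (a x : ℝ) :
    HasDerivAt (fun y => Real.exp (-(a * y ^ 2))) (-(2 * a * x) * Real.exp (-(a * x ^ 2))) x := by
  have h0 : HasDerivAt (fun y : ℝ => -(a * y ^ 2)) (-(2 * a * x)) x := by
    have h := ((hasDerivAt_pow 2 x).const_mul a).neg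
    have e : -(2 * a * x) = -(a * (((2:ℕ):ℝ) * x ^ (2 - 1))) := by
      push_cast
      ring
    rw [e]
    exact h
  have h := h0.exp
  rw [mul_comm] at h
  exact h

theorem hasDeriv_pg (a x : ℝ) (p : Polynomial ℝ) :
    HasDerivAt (fun y => p.eval y * Real.exp (-(a * y ^ 2)))
      ((p.derivative.eval x - 2 * a * x * p.eval x) * Real.exp (-(a * x ^ 2))) x := by
  have h := (p.hasDerivAt x).mul (hasDeriv_g a x)
  have e : (p.derivative.eval x - 2 * a * x * p.eval x) * Real.exp (-(a * x ^ 2)) =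
      p.derivative.eval x * Real.exp (-(a * x ^ 2)) +
      p.eval x * (-(2 * a * x) * Real.exp (-(a * x ^ 2))) := by ring
  rw [e]
  exact h

theorem iter_g (m : ℕ) : iteratedDeriv m (fun y => Real.exp (-(2 * π * y ^ 2))) =
    fun x => (-1 : ℝ) ^ m * ((PP m).eval x * Real.exp (-(2 * π * x ^ 2))) := by
  induction m with
  | zero => simp [PP]
  | succ m ih =>
    rw [iteratedDeriv_succ, ih]
    funext x
    rw [((hasDeriv_pg (2 * π) x (PP m)).const_mul _).deriv, PP_succ]
    simp
    ring

/-- normalising constant -/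
noncomputable def cc (m : ℕ) : ℝ := (2 : ℝ) ^ ((1 : ℝ) / 4 - (m : ℝ)) *
  (Nat.factorial m : ℝ) ^ (-(1 : ℝ) / 2) * Real.pi ^ (-(m : ℝ) / 2)

theorem cc_pos (m : ℕ) : 0 < cc m := by
  have := Nat.factorial_pos m
  unfold cc
  positivity

/-- squared norms -/
noncomputable def KK (m : ℕ) : ℝ := (4 * π) ^ m * (Nat.factorial m : ℝ) / √2

theorem KK_succ (m : ℕ) : KK (m+1) = 4 * π * (m+1) * KK m := by
  unfold KK
  rw [Nat.factorial_succ]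
  push_cast
  ring

theorem cc_sq (m : ℕ) : cc m ^ 2 * KK m = 1 := by
  have hf : (0:ℝ) < Nat.factorial m := by exact_mod_cast Nat.factorial_pos m
  have h1 : ((2 : ℝ) ^ ((1 : ℝ) / 4 - (m : ℝ))) ^ 2 = √2 / 4 ^ m := by
    rw [← Real.rpow_natCast, ← Real.rpow_mul (by norm_num), Real.sqrt_eq_rpow,
      show (4:ℝ) ^ m = (2:ℝ) ^ (2 * (m:ℝ)) by
        rw [Real.rpow_mul (by norm_num), Real.rpow_natCast]; norm_num,
      ← Real.rpow_sub (by norm_num)]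
    congr 1
    push_cast
    ring
  have h2 : ((Nat.factorial m : ℝ) ^ (-(1 : ℝ) / 2)) ^ 2 = (Nat.factorial m : ℝ)⁻¹ := by
    rw [← Real.rpow_natCast, ← Real.rpow_mul hf.le, ← Real.rpow_neg_one]
    congr 1
    push_cast
    ring
  have h3 : (Real.pi ^ (-(m : ℝ) / 2)) ^ 2 = (π ^ m)⁻¹ := by
    rw [← Real.rpow_natCast, ← Real.rpow_mul pi_pos.le, ← Real.rpow_natCast,
      ← Real.rpow_neg pi_pos.le]
    congr 1
    push_cast
    ring
  unfold cc KK
  rw [mul_pow, mul_pow, h1, h2, h3, mul_pow]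
  have := pi_pos
  field_simp

theorem hermiteFun_eq (m : ℕ) :
    hermiteFun m = fun x => cc m * ((PP m).eval x * Real.exp (-(π * x ^ 2))) := by
  funext x
  have hs : ((-1:ℝ) ^ m) * (-1) ^ m = 1 := by rw [← mul_pow]; simp
  have he : Real.exp (2 * π * x ^ 2) * Real.exp (-(2 * π * x ^ 2)) = 1 := by
    rw [← Real.exp_add]; simp
  unfold hermiteFun hermitePoly
  rw [iter_g]
  unfold cc
  linear_combination ((2 : ℝ) ^ ((1 : ℝ) / 4 - (m : ℝ)) *
    (Nat.factorial m : ℝ) ^ (-(1 : ℝ) / 2) * Real.pi ^ (-(m : ℝ) / 2)) * (PP m).eval x *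
      Real.exp (-(π * x ^ 2)) * (hs * (Real.exp (2 * π * x ^ 2) * Real.exp (-(2 * π * x ^ 2))) + he)

theorem hermiteFun_deriv (m : ℕ) (x : ℝ) :
    deriv (hermiteFun m) x = cc m * ((1/2) * ((PP m).derivative - PP (m+1)).eval x
      * Real.exp (-(π * x ^ 2))) := by
  rw [hermiteFun_eq, ((hasDeriv_pg π x (PP m)).const_mul _).deriv, PP_succ]
  simp
  ring_nf
  simp

theorem int_pg (p : Polynomial ℝ) :
    Integrable (fun x : ℝ => p.eval x * Real.exp (-(2 * π * x ^ 2))) := by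
  induction p using Polynomial.induction_on' with
  | add p q hp hq =>
    simp only [Polynomial.eval_add, add_mul]
    exact hp.add hq
  | monomial n a =>
    have h := (integrable_rpow_mul_exp_neg_mul_sq (b := 2 * π) (by positivity) (s := n)
      (by have : (0:ℝ) ≤ n := n.cast_nonneg
          linarith)).const_mul a
    convert h using 1
    funext x
    simp
    ring

/-- Gaussian functional -/
noncomputable def LL (p : Polynomial ℝ) : ℝ := ∫ x : ℝ, p.eval x * Real.exp (-(2 * π * x ^ 2))

theorem LL_add (p q : Polynomial ℝ) : LL (p + q) = LL p + LL q := by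
  unfold LL
  rw [← integral_add (int_pg p) (int_pg q)]
  simp [add_mul]

theorem LL_C (a : ℝ) (p : Polynomial ℝ) : LL (Polynomial.C a * p) = a * LL p := by
  unfold LL
  rw [← integral_const_mul]
  simp [mul_assoc]

theorem LL_sub (p q : Polynomial ℝ) : LL (p - q) = LL p - LL q := by
  unfold LL
  rw [← integral_sub (int_pg p) (int_pg q)]
  simp [sub_mul]

theorem LL_one : LL 1 = 1 / √2 := by
  unfold LL
  have h := integral_gaussian (2 * π)
  simp only [Polynomial.eval_one, one_mul]
  simp only [neg_mul] at h
  rw [h, show π / (2 * π) = 1 / 2 by have := pi_pos; field_simp]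
  simp

open Polynomial in
theorem LL_parts (p : Polynomial ℝ) : LL (C (4 * π) * X * p - derivative p) = 0 := by
  unfold LL
  have e : (fun x : ℝ => ((derivative p).eval x - 2 * (2 * π) * x * p.eval x) *
      Real.exp (-(2 * π * x ^ 2))) = fun x => (derivative p - C (4 * π) * X * p).eval x *
      Real.exp (-(2 * π * x ^ 2)) := by
    funext x
    simp
    ring_nf
    simp
  have h := integral_eq_zero_of_hasDerivAt_of_integrable (fun x => hasDeriv_pg (2 * π) x p)
    (by rw [e]; exact int_pg _) (int_pg p)
  rw [e] at h
  rw [← neg_eq_zero, ← integral_neg, ← h]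
  congr 1
  funext x
  simp
  ring

open Polynomial in
theorem LL_step (m : ℕ) (q : Polynomial ℝ) : LL (PP (m+1) * q) = LL (PP m * derivative q) := by
  rw [← sub_eq_zero, ← LL_sub, ← LL_parts (PP m * q), PP_succ]
  congr 1
  rw [derivative_mul]
  ring

theorem LL_PP (m n : ℕ) : LL (PP m * PP n) = if m = n then KK m else 0 := by
  have h0 : ∀ k, LL (PP (k+1) * PP 0) = 0 := fun k => by
    rw [LL_step]; simp [PP, LL]
  induction m generalizing n with
  | zero =>
    cases n with
    | zero => simp [PP, LL_one, KK]
    | succ n => rw [mul_comm, h0]; simp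
  | succ m ih =>
    cases n with
    | zero => rw [h0]; simp
    | succ n =>
      rw [LL_step, PP_der, mul_left_comm, LL_C, ih]
      by_cases h : m = n
      · subst h; simp [KK_succ]
      · simp [h]

open Polynomial in
theorem LL_dd (m n : ℕ) : LL (derivative (PP m) * derivative (PP n)) =
    4 * π * m * LL (PP m * PP n) := by
  cases m with
  | zero => simp [PP, LL]
  | succ m =>
    rw [PP_der, mul_assoc, LL_C, ← LL_step]
    push_cast
    ring

theorem exp_sq (x : ℝ) :
    Real.exp (-(π * x ^ 2)) * Real.exp (-(π * x ^ 2)) = Real.exp (-(2 * π * x ^ 2)) := by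
  rw [← Real.exp_add]; ring_nf

theorem inner_eq (m n : ℕ) : (∫ x : ℝ, hermiteFun m x * hermiteFun n x)
        + ∫ x : ℝ, deriv (hermiteFun m) x * deriv (hermiteFun n) x
    = cc m * cc n * ((if m = n then KK m else 0) + 1/4 * (4 * π * m * (if m = n then KK m else 0)
      - (if m = n + 2 then KK m else 0) - (if n = m + 2 then KK n else 0)
      + (if m = n then KK (m+1) else 0))) := by
  have h1 : (∫ x : ℝ, hermiteFun m x * hermiteFun n x) = cc m * cc n * LL (PP m * PP n) := by
    unfold LL
    rw [← integral_const_mul]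
    congr 1
    funext x
    rw [hermiteFun_eq, hermiteFun_eq, ← exp_sq]
    simp
    ring
  have h2 : (∫ x : ℝ, deriv (hermiteFun m) x * deriv (hermiteFun n) x) =
      cc m * cc n * (1 / 4) * LL (((PP m).derivative - PP (m+1)) * ((PP n).derivative - PP (n+1))) := by
    unfold LL
    rw [← integral_const_mul]
    congr 1
    funext x
    rw [hermiteFun_deriv, hermiteFun_deriv, ← exp_sq, Polynomial.eval_mul]
    ring
  have h3 : LL (((PP m).derivative - PP (m+1)) * ((PP n).derivative - PP (n+1))) =
      4 * π * m * LL (PP m * PP n) - LL (PP (n+2) * PP m) - LL (PP (m+2) * PP n)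
      + LL (PP (m+1) * PP (n+1)) := by
    rw [← LL_dd, LL_step (n+1), LL_step (m+1), ← LL_sub, ← LL_sub, ← LL_add]
    congr 1
    ring
  rw [h1, h2, h3]
  simp only [LL_PP]
  have e1 : (if n + 2 = m then KK (n+2) else 0) = if m = n + 2 then KK m else 0 := by
    by_cases h : m = n + 2
    · simp [h]
    · simp [h, Ne.symm h]
  have e2 : (if m + 2 = n then KK (m+2) else 0) = if n = m + 2 then KK n else 0 := by
    by_cases h : n = m + 2
    · simp [h]
    · simp [h, Ne.symm h]
  rw [e1, e2]
  simp only [Nat.add_right_cancel_iff]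
  ring

theorem cc_two (n : ℕ) : cc (n+2) * cc n * KK (n+2) = 4 * (π * √(((n:ℝ)+2) * ((n:ℝ)+1))) := by
  have hp := pi_pos
  have hK : ∀ k, 0 < KK k := fun k => by
    have := cc_sq k
    have h := cc_pos k
    by_contra hc
    nlinarith [sq_nonneg (cc k), mul_nonneg (sq_nonneg (cc k)) (neg_nonneg.2 (not_lt.1 hc))]
  have a := cc_pos n
  have b := cc_pos (n+2)
  have c := hK (n+2)
  rw [← sq_eq_sq₀ (by positivity) (by positivity)]
  have hs : √(((n:ℝ)+2) * ((n:ℝ)+1)) ^ 2 = ((n:ℝ)+2) * ((n:ℝ)+1) := Real.sq_sqrt (by positivity)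
  have h1 := cc_sq n
  have h2 := cc_sq (n+2)
  have h3 : KK (n+2) = 4 * π * (n+2) * (4 * π * (n+1) * KK n) := by
    rw [KK_succ (n+1), KK_succ]
    push_cast
    ring
  calc (cc (n+2) * cc n * KK (n+2)) ^ 2 = (cc (n+2) ^ 2 * KK (n+2)) * (cc n ^ 2 * KK (n+2)) := by ring
    _ = 16 * π ^ 2 * ((n+2) * (n+1)) * (cc n ^ 2 * KK n) := by rw [h2, h3]; ring
    _ = _ := by rw [h1, mul_pow, mul_pow, hs]; ring

/-- The `W^{1,2}`-inner product of Hermite functions: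
`⟨𝓗_m, 𝓗_n⟩ = 1 + π(2m+1)` if `m = n`; `= −π√(ℓ(ℓ−1))`, `ℓ = max{m,n}`, if `|m−n| = 2`;
and `= 0` otherwise. -/
theorem hermiteFun_W12_inner (m n : ℕ) :
    (m = n →
      (∫ x : ℝ, hermiteFun m x * hermiteFun n x)
        + ∫ x : ℝ, deriv (hermiteFun m) x * deriv (hermiteFun n) x
        = 1 + Real.pi * (2 * (m : ℝ) + 1)) ∧
    ((m = n + 2 ∨ n = m + 2) →
      (∫ x : ℝ, hermiteFun m x * hermiteFun n x)
        + ∫ x : ℝ, deriv (hermiteFun m) x * deriv (hermiteFun n) x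
        = -(Real.pi * Real.sqrt ((max m n : ℝ) * ((max m n : ℝ) - 1)))) ∧
    (m ≠ n → ¬(m = n + 2 ∨ n = m + 2) →
      (∫ x : ℝ, hermiteFun m x * hermiteFun n x)
        + ∫ x : ℝ, deriv (hermiteFun m) x * deriv (hermiteFun n) x = 0) := by
  rw [inner_eq]
  refine ⟨?_, ?_, ?_⟩
  · rintro rfl
    have h := cc_sq m
    have h0 : ¬ (m = m + 2) := by omega
    simp only [h0, if_true, if_false, KK_succ]
    linear_combination (1 + π * (2 * (m:ℝ) + 1)) * h
  · rintro (rfl | rfl)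
    · have h := cc_two n
      have h0 : ¬ (n + 2 = n) := by omega
      have h1 : ¬ (n = n + 2 + 2) := by omega
      have hm : max (((n + 2 : ℕ) : ℝ)) (n : ℝ) = (n:ℝ) + 2 := by
        push_cast
        exact max_eq_left (by linarith)
      rw [hm, show (n:ℝ) + 2 - 1 = n + 1 by ring]
      simp only [h0, h1, if_true, if_false]
      linear_combination (-1/4) * h
    · have h := cc_two m
      have h0 : ¬ (m = m + 2) := by omega
      have h1 : ¬ (m = m + 2 + 2) := by omega
      have hm : max (m : ℝ) (((m + 2 : ℕ) : ℝ)) = (m:ℝ) + 2 := by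
        push_cast
        exact max_eq_right (by linarith)
      rw [hm, show (m:ℝ) + 2 - 1 = m + 1 by ring]
      simp only [h0, h1, if_true, if_false]
      linear_combination (-1/4) * h
  · intro h1 h2
    push Not at h2
    simp [h1, h2.1, h2.2]
end

section
/- Let (Ω, ℱ, ℙ) be a probability space, n ≥ 1, 0 ≤ t < T < ∞, 0 < λ̃ ≤ 1, and for each x ∈ ℝⁿ let X_x : Ω × [t,T] → ℝⁿ be jointly measurable with continuous sample paths. Let K ⊂ ℝⁿ be compact. Let φ : ℝⁿ → ℝ be λ̃-Hölder continuous with constant C_φ, and let c : ℝⁿ → ℝ be bounded with ‖c‖_∞ ≤ M_c and λ̃-Hölder continuous with constant K_c. Assume: (i) there is C_K > 0 such that for all x, y ∈ K the random variable ω ↦ sup_{t≤s≤T}|X_x(ω,s) − X_y(ω,s)|² is integrable with E[ sup_{t≤s≤T} |X_x(s) − X_y(s)|² ] ≤ C_K |x−y|²; (ii) there is M_0 > 0 such that sup_{y∈K} E[ |φ(X_y(T))|^{2/(2−λ̃)} ] ≤ M_0. Define u(x) := E[ φ(X_x(T)) · exp(∫_t^T c(X_x(s)) ds) ] for x ∈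 K. Then for all x, y ∈ K: |u(x) − u(y)| ≤ Γ·|x−y|^{λ̃}, where Γ = e^{(T−t)M_c} · C_K^{λ̃/2} · ( C_φ + K_c · M_0^{1−λ̃/2} · (T−t) ). -/
open MeasureTheory

lemma fk_cont {E : Type*} [NormedAddCommGroup E] (g : E → ℝ) (C lam : ℝ) (hlam : 0 < lam)
    (h : ∀ z w, |g z - g w| ≤ C * ‖z - w‖ ^ lam) : Continuous g := by
  rw [continuous_iff_continuousAt]
  intro w
  rw [ContinuousAt, tendsto_iff_dist_tendsto_zero]
  have h2 : Continuous (fun z : E => C * ‖z - w‖ ^ lam) :=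
    continuous_const.mul ((continuous_id.sub continuous_const).norm.rpow_const
      (fun _ => Or.inr hlam.le))
  have h3 := h2.tendsto w
  simp only [sub_self, norm_zero, Real.zero_rpow hlam.ne', mul_zero] at h3
  exact squeeze_zero (fun _ => dist_nonneg) (fun z => by rw [Real.dist_eq]; exact h z w) h3

lemma fk_exp (a b m : ℝ) (ha : a ≤ m) (hb : b ≤ m) :
    |Real.exp a - Real.exp b| ≤ Real.exp m * |a - b| := by
  wlog hab : b ≤ a generalizing a b
  · rw [abs_sub_comm, abs_sub_comm a b]
    exact this b a hb ha (le_of_not_ge hab)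
  rw [abs_of_nonneg (sub_nonneg.2 (Real.exp_le_exp.2 hab)), abs_of_nonneg (sub_nonneg.2 hab)]
  have h1 : Real.exp b = Real.exp a * Real.exp (b - a) := by rw [← Real.exp_add]; ring_nf
  have h2 := Real.add_one_le_exp (b - a)
  have h3 := Real.exp_le_exp.2 ha
  have h4 := Real.exp_pos a
  calc Real.exp a - Real.exp b ≤ Real.exp a * (a - b) := by rw [h1]; nlinarith
    _ ≤ _ := by gcongr

/-- Hölder continuity on a compact `K` of `u(x) = E[φ(X_x(T)) exp(∫_t^T c(X_x(s))ds)]`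
for `λ̃`-Hölder `φ` (constant `C_φ`), bounded `λ̃`-Hölder `c` (`‖c‖_∞ ≤ M_c`, constant `K_c`),
with the stability estimate `E[sup_{t≤s≤T}|X_x(s)−X_y(s)|²] ≤ C_K|x−y|²` on `K` and moment
bound `sup_{y∈K} E[|φ(X_y(T))|^{2/(2−λ̃)}] ≤ M_0`:
`|u(x)−u(y)| ≤ e^{(T−t)M_c} C_K^{λ̃/2} (C_φ + K_c M_0^{1−λ̃/2}(T−t)) |x−y|^{λ̃}`. -/
theorem feynmanKac_holder_on_compact
    (n : ℕ) (hn : 1 ≤ n) (Ω : Type*) [MeasurableSpace Ω] (μ : Measure Ω)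
    [IsProbabilityMeasure μ] (t T : ℝ) (ht : 0 ≤ t) (htT : t < T)
    (lam : ℝ) (hlam : 0 < lam) (hlam1 : lam ≤ 1)
    (X : EuclideanSpace ℝ (Fin n) → Ω → ℝ → EuclideanSpace ℝ (Fin n))
    (hXmeas : ∀ x, Measurable (Function.uncurry (X x)))
    (hXcont : ∀ x ω, ContinuousOn (X x ω) (Set.Icc t T))
    (K : Set (EuclideanSpace ℝ (Fin n))) (hK : IsCompact K)
    (φ c : EuclideanSpace ℝ (Fin n) → ℝ)
    (Cφ Mc Kc : ℝ)
    (hφH : ∀ z w, |φ z - φ w| ≤ Cφ * ‖z - w‖ ^ lam)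
    (hcb : ∀ z, |c z| ≤ Mc)
    (hcH : ∀ z w, |c z - c w| ≤ Kc * ‖z - w‖ ^ lam)
    (C_K : ℝ) (hCK : 0 < C_K)
    (hint : ∀ x ∈ K, ∀ y ∈ K,
      Integrable (fun ω => ⨆ s : Set.Icc t T, ‖X x ω (s : ℝ) - X y ω (s : ℝ)‖ ^ 2) μ)
    (hstab : ∀ x ∈ K, ∀ y ∈ K,
      (∫ ω, (⨆ s : Set.Icc t T, ‖X x ω (s : ℝ) - X y ω (s : ℝ)‖ ^ 2) ∂μ)
        ≤ C_K * ‖x - y‖ ^ 2)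
    (M₀ : ℝ) (hM₀ : 0 < M₀)
    (hmom : ∀ y ∈ K,
      Integrable (fun ω => |φ (X y ω T)| ^ ((2 : ℝ) / (2 - lam))) μ ∧
      (∫ ω, |φ (X y ω T)| ^ ((2 : ℝ) / (2 - lam)) ∂μ) ≤ M₀) :
    ∀ x ∈ K, ∀ y ∈ K,
      |(∫ ω, φ (X x ω T) * Real.exp (∫ s in t..T, c (X x ω s)) ∂μ)
          - ∫ ω, φ (X y ω T) * Real.exp (∫ s in t..T, c (X y ω s)) ∂μ|
        ≤ Real.exp ((T - t) * Mc) * C_K ^ (lam / 2)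
            * (Cφ + Kc * M₀ ^ (1 - lam / 2) * (T - t)) * ‖x - y‖ ^ lam := by
  intro x hx y hy
  have : Nonempty (Fin n) := ⟨⟨0, hn⟩⟩
  have hφc := fk_cont φ Cφ lam hlam hφH
  have hcc := fk_cont c Kc lam hlam hcH
  obtain ⟨v, hv⟩ := exists_norm_eq (EuclideanSpace ℝ (Fin n)) (zero_le_one (α := ℝ))
  have hCφ : 0 ≤ Cφ := by
    have := (abs_nonneg _).trans (hφH v 0)
    simpa [hv] using this
  have hKc : 0 ≤ Kc := by
    have := (abs_nonneg _).trans (hcH v 0)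
    simpa [hv] using this
  have hTt : 0 < T - t := sub_pos.2 htT
  set S : Ω → ℝ := fun ω => ⨆ s : Set.Icc t T, ‖X x ω (s : ℝ) - X y ω (s : ℝ)‖ ^ 2 with hS
  have hSint : Integrable S μ := hint x hx y hy
  have hSst : ∫ ω, S ω ∂μ ≤ C_K * ‖x - y‖ ^ 2 := hstab x hx y hy
  have hS0 : ∀ ω, 0 ≤ S ω := fun ω => Real.iSup_nonneg (fun s => by positivity)
  set Z : Ω → ℝ := fun ω => S ω ^ (lam / 2) with hZ
  have hZ0 : ∀ ω, 0 ≤ Z ω := fun ω => Real.rpow_nonneg (hS0 ω) _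
  have hle : ∀ ω, ∀ s ∈ Set.Icc t T, ‖X x ω s - X y ω s‖ ^ lam ≤ Z ω := by
    intro ω s hs
    have hb : BddAbove (Set.range (fun s : Set.Icc t T =>
        ‖X x ω (s : ℝ) - X y ω (s : ℝ)‖ ^ 2)) := by
      have h1 : ContinuousOn (fun s => ‖X x ω s - X y ω s‖ ^ 2) (Set.Icc t T) :=
        (((hXcont x ω).sub (hXcont y ω)).norm).pow 2
      have h2 := isCompact_Icc.bddAbove_image h1
      rwa [Set.image_eq_range] at h2
    have h3 : ‖X x ω s - X y ω s‖ ^ 2 ≤ S ω := le_ciSup hb ⟨s, hs⟩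
    have h4 : ‖X x ω s - X y ω s‖ ^ lam = (‖X x ω s - X y ω s‖ ^ 2) ^ (lam / 2) := by
      rw [← Real.rpow_natCast, ← Real.rpow_mul (norm_nonneg _)]
      congr 1; push_cast; ring
    rw [h4]
    exact Real.rpow_le_rpow (by positivity) h3 (by positivity)
  -- exponent integrals
  have hXs : ∀ z ω, Measurable (X z ω) := fun z ω => (hXmeas z).comp measurable_prodMk_left
  have hII : ∀ z ω, IntervalIntegrable (fun s => c (X z ω s)) volume t T := by
    intro z ω
    refine (intervalIntegrable_const (c := Mc)).mono_fun
      (hcc.measurable.comp (hXs z ω)).aestronglyMeasurable ?_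
    filter_upwards with s
    exact (hcb _).trans (le_abs_self _)
  set A : EuclideanSpace ℝ (Fin n) → Ω → ℝ := fun z ω => ∫ s in t..T, c (X z ω s) with hA
  have hAm : ∀ z, Measurable (A z) := by
    intro z
    have h1 : StronglyMeasurable (fun p : Ω × ℝ => c (X z p.1 p.2)) :=
      (hcc.measurable.comp (hXmeas z)).stronglyMeasurable
    have h2 := h1.integral_prod_right' (ν := volume.restrict (Set.Ioc t T))
    simp only [hA, intervalIntegral.integral_of_le htT.le]
    exact h2.measurable
  have hAb : ∀ z ω, A z ω ≤ (T - t) * Mc := by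
    intro z ω
    have := intervalIntegral.norm_integral_le_of_norm_le_const (a := t) (b := T) (C := Mc)
      (f := fun s => c (X z ω s)) (fun s _ => hcb _)
    rw [abs_of_pos hTt] at this
    calc A z ω ≤ ‖A z ω‖ := le_abs_self _
      _ ≤ _ := by rw [mul_comm]; exact this
  have hAd : ∀ ω, |A x ω - A y ω| ≤ Kc * Z ω * (T - t) := by
    intro ω
    simp only [hA]
    rw [← intervalIntegral.integral_sub (hII x ω) (hII y ω)]
    have := intervalIntegral.norm_integral_le_of_norm_le_const (a := t) (b := T)
      (C := Kc * Z ω) (f := fun s => c (X x ω s) - c (X y ω s)) (fun s hs => by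
        rw [Set.uIoc_of_le htT.le] at hs
        exact (hcH _ _).trans (mul_le_mul_of_nonneg_left (hle ω s ⟨hs.1.le, hs.2⟩) hKc))
    rwa [abs_of_pos hTt] at this
  -- Hölder exponents
  set p : ℝ := 2 / (2 - lam) with hp
  set q : ℝ := 2 / lam with hq
  have h2l : 0 < 2 - lam := by linarith
  have hp0 : 0 < p := by positivity
  have hq0 : 0 < q := by positivity
  have hp1 : 1 < p := by rw [hp, lt_div_iff₀ h2l]; linarith
  have hpq : p.HolderConjugate q := by
    rw [Real.holderConjugate_iff]
    refine ⟨hp1, ?_⟩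
    rw [hp, hq]; field_simp; ring
  have hXT : ∀ z, Measurable (fun ω => X z ω T) := fun z =>
    (hXmeas z).comp (measurable_id.prodMk measurable_const)
  have hφm : ∀ z, Measurable (fun ω => φ (X z ω T)) := fun z => hφc.measurable.comp (hXT z)
  have hLp : ∀ z ∈ K, MemLp (fun ω => φ (X z ω T)) (ENNReal.ofReal p) μ := by
    intro z hz
    rw [← integrable_norm_rpow_iff (hφm z).aestronglyMeasurable (by simpa using hp0) (by simp)]
    rw [ENNReal.toReal_ofReal hp0.le]
    exact (hmom z hz).1
  have hφi : ∀ z ∈ K, Integrable (fun ω => φ (X z ω T)) μ := fun z hz =>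
    (hLp z hz).integrable (by rw [← ENNReal.ofReal_one]; exact ENNReal.ofReal_le_ofReal hp1.le)
  have hZm : AEStronglyMeasurable Z μ :=
    (hSint.aestronglyMeasurable.aemeasurable.pow_const _).aestronglyMeasurable
  have hZq : ∀ ω, Z ω ^ q = S ω := by
    intro ω
    simp only [hZ]
    rw [← Real.rpow_mul (hS0 ω)]
    have : lam / 2 * q = 1 := by rw [hq]; field_simp
    rw [this, Real.rpow_one]
  have hZLq : MemLp Z (ENNReal.ofReal q) μ := by
    rw [← integrable_norm_rpow_iff hZm (by simpa using hq0) (by simp)]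
    rw [ENNReal.toReal_ofReal hq0.le]
    refine hSint.congr (Filter.Eventually.of_forall fun ω => ?_)
    simp only [Real.norm_eq_abs, abs_of_nonneg (hZ0 ω), hZq]
  have hq1 : 1 / q = lam / 2 := by rw [hq, one_div_div]
  have hp1' : 1 / p = 1 - lam / 2 := by rw [hp, one_div_div]; ring
  have hSb : (∫ ω, Z ω ^ q ∂μ) ^ (1 / q) ≤ C_K ^ (lam / 2) * ‖x - y‖ ^ lam := by
    simp only [hZq, hq1]
    calc (∫ ω, S ω ∂μ) ^ (lam / 2) ≤ (C_K * ‖x - y‖ ^ 2) ^ (lam / 2) :=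
          Real.rpow_le_rpow (integral_nonneg hS0) hSst (by positivity)
      _ = _ := by
        rw [Real.mul_rpow hCK.le (by positivity), ← Real.rpow_natCast,
          ← Real.rpow_mul (norm_nonneg _)]
        congr 2; push_cast; ring
  have hZi : Integrable Z μ :=
    hZLq.integrable (by
      rw [← ENNReal.ofReal_one]; exact ENNReal.ofReal_le_ofReal hpq.symm.lt.le)
  have hI1 : ∫ ω, Z ω ∂μ ≤ C_K ^ (lam / 2) * ‖x - y‖ ^ lam := by
    have := integral_mul_le_Lp_mul_Lq_of_nonneg (μ := μ) hpq (f := fun _ => (1 : ℝ)) (g := Z)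
      (Filter.Eventually.of_forall fun _ => zero_le_one) (Filter.Eventually.of_forall hZ0)
      (memLp_const 1) hZLq
    simp only [one_mul, Real.one_rpow, integral_const, probReal_univ, smul_eq_mul] at this
    exact this.trans hSb
  have hI2 : ∫ ω, |φ (X y ω T)| * Z ω ∂μ
      ≤ M₀ ^ (1 - lam / 2) * (C_K ^ (lam / 2) * ‖x - y‖ ^ lam) := by
    have := integral_mul_le_Lp_mul_Lq_of_nonneg (μ := μ) hpq (f := fun ω => |φ (X y ω T)|)
      (g := Z) (Filter.Eventually.of_forall fun _ => abs_nonneg _)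
      (Filter.Eventually.of_forall hZ0) (hLp y hy).norm hZLq
    refine this.trans ?_
    have h5 : (∫ ω, |φ (X y ω T)| ^ p ∂μ) ^ (1 / p) ≤ M₀ ^ (1 - lam / 2) := by
      rw [hp1']
      exact Real.rpow_le_rpow (integral_nonneg fun _ => by positivity) (hmom y hy).2
        (by linarith)
    exact mul_le_mul h5 hSb (Real.rpow_nonneg (integral_nonneg fun ω =>
      Real.rpow_nonneg (hZ0 ω) _) _) (by positivity)
  have hI2i : Integrable (fun ω => |φ (X y ω T)| * Z ω) μ := by
    have hpq' : ENNReal.HolderConjugate (ENNReal.ofReal p) (ENNReal.ofReal q) := hpq.ennrealOfReal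
    exact (hLp y hy).norm.integrable_mul hZLq
  have hUi : ∀ z ∈ K, Integrable (fun ω => φ (X z ω T) * Real.exp (A z ω)) μ := by
    intro z hz
    refine (hφi z hz).mul_bdd (c := Real.exp ((T - t) * Mc))
      (Real.measurable_exp.comp (hAm z)).aestronglyMeasurable
      (Filter.Eventually.of_forall fun ω => ?_)
    rw [Real.norm_eq_abs, Real.abs_exp]
    exact Real.exp_le_exp.2 (hAb z ω)
  set E := Real.exp ((T - t) * Mc) with hE
  have hE0 : 0 < E := Real.exp_pos _
  have hpt : ∀ ω, |φ (X x ω T) * Real.exp (A x ω) - φ (X y ω T) * Real.exp (A y ω)|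
      ≤ E * Cφ * Z ω + E * Kc * (T - t) * (|φ (X y ω T)| * Z ω) := by
    intro ω
    have e1 : φ (X x ω T) * Real.exp (A x ω) - φ (X y ω T) * Real.exp (A y ω)
        = (φ (X x ω T) - φ (X y ω T)) * Real.exp (A x ω)
          + φ (X y ω T) * (Real.exp (A x ω) - Real.exp (A y ω)) := by ring
    rw [e1]
    refine (abs_add_le _ _).trans ?_
    rw [abs_mul, abs_mul, Real.abs_exp]
    have b1 : |φ (X x ω T) - φ (X y ω T)| ≤ Cφ * Z ω := (hφH _ _).trans
      (mul_le_mul_of_nonneg_left (hle ω T ⟨htT.le, le_rfl⟩) hCφ)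
    have b2 : Real.exp (A x ω) ≤ E := Real.exp_le_exp.2 (hAb x ω)
    have b3 : |Real.exp (A x ω) - Real.exp (A y ω)| ≤ E * (Kc * Z ω * (T - t)) :=
      (fk_exp _ _ _ (hAb x ω) (hAb y ω)).trans (mul_le_mul_of_nonneg_left (hAd ω) hE0.le)
    have c1 := mul_le_mul b1 b2 (Real.exp_pos _).le (mul_nonneg hCφ (hZ0 ω))
    have c2 := mul_le_mul_of_nonneg_left b3 (abs_nonneg (φ (X y ω T)))
    linarith
  change |(∫ ω, φ (X x ω T) * Real.exp (A x ω) ∂μ)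
      - ∫ ω, φ (X y ω T) * Real.exp (A y ω) ∂μ| ≤ _
  rw [← integral_sub (hUi x hx) (hUi y hy)]
  calc _ ≤ ∫ ω, |φ (X x ω T) * Real.exp (A x ω) - φ (X y ω T) * Real.exp (A y ω)| ∂μ :=
        abs_integral_le_integral_abs
    _ ≤ ∫ ω, (E * Cφ * Z ω + E * Kc * (T - t) * (|φ (X y ω T)| * Z ω)) ∂μ :=
        integral_mono ((hUi x hx).sub (hUi y hy)).abs
          ((hZi.const_mul _).add (hI2i.const_mul _)) hpt
    _ = E * Cφ * (∫ ω, Z ω ∂μ) + E * Kc * (T - t) * ∫ ω, |φ (X y ω T)| * Z ω ∂μ := by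
        rw [integral_add (hZi.const_mul _) (hI2i.const_mul _), integral_const_mul,
          integral_const_mul]
    _ ≤ E * Cφ * (C_K ^ (lam / 2) * ‖x - y‖ ^ lam) + E * Kc * (T - t) *
          (M₀ ^ (1 - lam / 2) * (C_K ^ (lam / 2) * ‖x - y‖ ^ lam)) :=
        add_le_add (mul_le_mul_of_nonneg_left hI1 (by positivity))
          (mul_le_mul_of_nonneg_left hI2 (by positivity))
    _ = _ := by ring
end
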